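/- arXiv:1905.07616 — 5 statements merged into one kernel-verified Lean document; each statement's English description precedes it below -/
import Mathlib

section
/- The number of Straight Flush hands — 5-card hands whose cards all have the same suit and whose set of values is a straight value-set other than {8,9,10,11,12} (so the hand is not a Royal Flush) — equals 36. -/
/-- A card is a pair of a value in `Fin 13` (values 0–12 representing
2,3,4,5,6,7,8,9,10,J,Q,K,A) and a suit in `Fin 4`. -/
abbrev Card : Type := Fin 13 × Fin 4

/-- The set of all 5-card poker hands: 5-element subsets of the 52-card deck. -/
def pokerHands : Finset (Finset Card) :=
  (Finset.univ : Finset Card).powersetCard 5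

/-- The set of values appearing in a hand. -/
def handValues (h : Finset Card) : Finset (Fin 13) := h.image Prod.fst

/-- The number of cards of the hand `h` having value `v`. -/
def countValue (h : Finset Card) (v : Fin 13) : ℕ :=
  (h.filter fun c => c.1 = v).card

/-- All cards of the hand have the same suit. -/
def SameSuit (h : Finset Card) : Prop := ∃ s : Fin 4, ∀ c ∈ h, c.2 = s

instance : DecidablePred SameSuit := fun h =>
  inferInstanceAs (Decidable (∃ s : Fin 4, ∀ c ∈ h, c.2 = s))

/-- The 10 straight value-sets: `{12,0,1,2,3}` (representing A,2,3,4,5) and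
`{i,i+1,i+2,i+3,i+4}` for `0 ≤ i ≤ 8`. -/
def straightValueSets : Finset (Finset (Fin 13)) :=
  { ({12, 0, 1, 2, 3} : Finset (Fin 13)),
    {0, 1, 2, 3, 4}, {1, 2, 3, 4, 5}, {2, 3, 4, 5, 6}, {3, 4, 5, 6, 7},
    {4, 5, 6, 7, 8}, {5, 6, 7, 8, 9}, {6, 7, 8, 9, 10}, {7, 8, 9, 10, 11},
    {8, 9, 10, 11, 12} }

/-- Royal Flush: the set of values is exactly `{8,9,10,11,12}`
(i.e. 10, J, Q, K, A) and all cards have the same suit. -/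
def RoyalFlush (h : Finset Card) : Prop :=
  handValues h = {8, 9, 10, 11, 12} ∧ SameSuit h

/-- Straight Flush: all cards have the same suit and the set of values is a
straight value-set other than `{8,9,10,11,12}`. -/
def StraightFlush (h : Finset Card) : Prop :=
  SameSuit h ∧ handValues h ∈ straightValueSets ∧
    handValues h ≠ ({8, 9, 10, 11, 12} : Finset (Fin 13))

/-- Four of a Kind: for some value `v`, the hand contains all 4 cards of
value `v` plus one additional card of a different value. -/
def FourOfAKind (h : Finset Card) : Prop :=
  ∃ v : Fin 13, countValue h v = 4 ∧ ∃ c ∈ h, c.1 ≠ v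

/-- Full House: there are distinct values `v ≠ w` such that exactly 3 cards
of the hand have value `v` and exactly 2 cards have value `w`. -/
def FullHouse (h : Finset Card) : Prop :=
  ∃ v w : Fin 13, v ≠ w ∧ countValue h v = 3 ∧ countValue h w = 2

/-- Flush: all cards have the same suit and the set of values is not a
straight value-set. -/
def Flush (h : Finset Card) : Prop :=
  SameSuit h ∧ handValues h ∉ straightValueSets

/-- Straight: the set of values is a straight value-set but the cards are
not all of the same suit. -/
def Straight (h : Finset Card) : Prop :=
  handValues h ∈ straightValueSets ∧ ¬ SameSuit h

/-- Three of a Kind: for some value `v`, exactly 3 cards of the hand have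
value `v` and the remaining 2 cards have two further distinct values. -/
def ThreeOfAKind (h : Finset Card) : Prop :=
  ∃ v : Fin 13, countValue h v = 3 ∧
    ∃ a b : Fin 13, a ≠ b ∧ a ≠ v ∧ b ≠ v ∧
      countValue h a = 1 ∧ countValue h b = 1

/-- Two Pair: there are distinct values `v ≠ w` such that exactly 2 cards of
the hand have value `v`, exactly 2 cards have value `w`, and the remaining
card has a value different from both. -/
def TwoPair (h : Finset Card) : Prop :=
  ∃ v w : Fin 13, v ≠ w ∧ countValue h v = 2 ∧ countValue h w = 2 ∧
    ∃ c ∈ h, c.1 ≠ v ∧ c.1 ≠ w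

/-- Pair: for some value `v`, exactly 2 cards of the hand have value `v` and
the remaining 3 cards have three further pairwise distinct values. -/
def Pair (h : Finset Card) : Prop :=
  ∃ v : Fin 13, countValue h v = 2 ∧
    ∃ a b c : Fin 13, a ≠ b ∧ a ≠ c ∧ b ≠ c ∧ a ≠ v ∧ b ≠ v ∧ c ≠ v ∧
      countValue h a = 1 ∧ countValue h b = 1 ∧ countValue h c = 1

/-- High Card: the 5 cards have 5 pairwise distinct values, the set of values
is not a straight value-set, and the cards are not all of the same suit. -/
def HighCard (h : Finset Card) : Prop :=
  (handValues h).card = 5 ∧ handValues h ∉ straightValueSets ∧ ¬ SameSuit h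

instance : DecidablePred RoyalFlush := fun h => by unfold RoyalFlush; infer_instance

instance : DecidablePred StraightFlush := fun h => by unfold StraightFlush; infer_instance

instance : DecidablePred FourOfAKind := fun h => by unfold FourOfAKind; infer_instance

instance : DecidablePred FullHouse := fun h => by unfold FullHouse; infer_instance

instance : DecidablePred Flush := fun h => by unfold Flush; infer_instance

instance : DecidablePred Straight := fun h => by unfold Straight; infer_instance

instance : DecidablePred ThreeOfAKind := fun h => by unfold ThreeOfAKind; infer_instance

instance : DecidablePred TwoPair := fun h => by unfold TwoPair; infer_instance

instance : DecidablePred Pair := fun h => by unfold Pair; infer_instance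

instance : DecidablePred HighCard := fun h => by unfold HighCard; infer_instance

/-!
A single-suit hand `h` is the product of its value-set and its suit, so it is determined by these
two. A straight flush thus amounts to a choice of one of the nine non-royal straight value-sets and,
independently, of one of the four suits; such a hand has five cards because its value-set has five
elements.
-/

section SuitedHands

variable {α β : Type*}

theorem product_singleton_inj {V W : Finset α} {s t : β} (hV : V.Nonempty) :
    V ×ˢ ({s} : Finset β) = W ×ˢ {t} ↔ V = W ∧ s = t := by
  have hne : ((V : Set α) ×ˢ ({s} : Set β)).Nonempty := hV.to_set.prod (Set.singleton_nonempty s)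
  rw [← Finset.coe_inj, Finset.coe_product, Finset.coe_product, Finset.coe_singleton,
    Finset.coe_singleton, Set.prod_eq_prod_iff_of_nonempty hne, Finset.coe_inj,
    Set.singleton_eq_singleton_iff]

variable [DecidableEq α]

theorem eq_image_fst_product_singleton_iff {h : Finset (α × β)} {s : β} :
    h = h.image Prod.fst ×ˢ {s} ↔ ∀ c ∈ h, c.2 = s := by
  refine ⟨fun heq c hc => ?_, fun hs => Finset.ext fun c => ?_⟩
  · rw [heq] at hc
    exact Finset.mem_singleton.1 (Finset.mem_product.1 hc).2
  · simp only [Finset.mem_product, Finset.mem_singleton, Finset.mem_image]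
    refine ⟨fun hc => ⟨⟨c, hc, rfl⟩, hs c hc⟩, ?_⟩
    rintro ⟨⟨d, hd, hdc⟩, hcs⟩
    rwa [← Prod.ext hdc ((hs d hd).trans hcs.symm)]

variable [DecidableEq β]

/-- The hands (finite sets of cards with values in `α` and suits in `β`) obtained by choosing a
value-set in `𝒱` and dealing all of it in one suit of `T`. Defining them as products, rather than
by a filter, makes them easy to count; `mem_suitedHands` recovers the description by a filter. -/
def suitedHands (𝒱 : Finset (Finset α)) (T : Finset β) : Finset (Finset (α × β)) :=
  Finset.image₂ (fun V s => V ×ˢ {s}) 𝒱 T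

theorem mem_suitedHands {𝒱 : Finset (Finset α)} {T : Finset β} {h : Finset (α × β)} :
    h ∈ suitedHands 𝒱 T ↔ (∃ s ∈ T, ∀ c ∈ h, c.2 = s) ∧ h.image Prod.fst ∈ 𝒱 := by
  simp only [suitedHands, Finset.mem_image₂, ← eq_image_fst_product_singleton_iff]
  constructor
  · rintro ⟨V, hV, s, hs, rfl⟩
    have hfst : (V ×ˢ ({s} : Finset β)).image Prod.fst = V :=
      Finset.product_image_fst (Finset.singleton_nonempty s)
    rw [hfst]
    exact ⟨⟨s, hs, rfl⟩, hV⟩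
  · rintro ⟨⟨s, hs, heq⟩, hV⟩
    exact ⟨h.image Prod.fst, hV, s, hs, heq.symm⟩

theorem sized_suitedHands {𝒱 : Finset (Finset α)} {T : Finset β} {r : ℕ}
    (h𝒱 : (𝒱 : Set (Finset α)).Sized r) :
    (suitedHands 𝒱 T : Set (Finset (α × β))).Sized r := by
  intro h hh
  obtain ⟨V, hV, s, -, rfl⟩ := Finset.mem_image₂.1 hh
  rw [Finset.card_product, Finset.card_singleton, mul_one, h𝒱 hV]

theorem card_suitedHands {𝒱 : Finset (Finset α)} (h𝒱 : ∅ ∉ 𝒱) (T : Finset β) :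
    (suitedHands 𝒱 T).card = 𝒱.card * T.card := by
  refine Finset.card_image₂_iff.2 ?_
  rintro ⟨V, s⟩ hVs ⟨W, t⟩ - heq
  have hV : V ≠ ∅ := ne_of_mem_of_not_mem (Set.mem_prod.1 hVs).1 h𝒱
  exact Prod.ext_iff.2 ((product_singleton_inj (Finset.nonempty_iff_ne_empty.2 hV)).1 heq)

end SuitedHands

/-- The value-sets of straight flushes: all straight value-sets except the royal one. -/
def straightFlushValueSets : Finset (Finset (Fin 13)) :=
  straightValueSets.erase {8, 9, 10, 11, 12}

theorem card_straightFlushValueSets : straightFlushValueSets.card = 9 := by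
  decide

theorem sized_straightFlushValueSets :
    (straightFlushValueSets : Set (Finset (Fin 13))).Sized 5 := by
  have hstraight : ∀ V ∈ straightValueSets, V.card = 5 := by simp [straightValueSets]
  exact fun V hV => hstraight V (Finset.mem_of_mem_erase hV)

theorem straightFlush_iff_mem_suitedHands {h : Finset Card} :
    StraightFlush h ↔ h ∈ suitedHands straightFlushValueSets Finset.univ := by
  simp only [mem_suitedHands, straightFlushValueSets, StraightFlush, SameSuit, handValues,
    Finset.mem_erase, Finset.mem_univ, true_and, and_comm]

theorem StraightFlush.mem_pokerHands {h : Finset Card} (hh : StraightFlush h) :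
    h ∈ pokerHands :=
  Finset.mem_powersetCard_univ.2 <|
    sized_suitedHands sized_straightFlushValueSets (straightFlush_iff_mem_suitedHands.1 hh)

theorem filter_straightFlush_pokerHands :
    pokerHands.filter StraightFlush = suitedHands straightFlushValueSets Finset.univ := by
  ext h
  rw [Finset.mem_filter, and_iff_right_of_imp StraightFlush.mem_pokerHands,
    straightFlush_iff_mem_suitedHands]

/-- There are exactly 36 Straight Flush hands. -/
theorem card_straightFlush : (pokerHands.filter StraightFlush).card = 36 := by
  have hempty : ∅ ∉ straightFlushValueSets := fun hmem =>
    absurd (sized_straightFlushValueSets hmem) (by decide)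
  calc (pokerHands.filter StraightFlush).card
      = (suitedHands straightFlushValueSets (Finset.univ : Finset (Fin 4))).card := by
        rw [filter_straightFlush_pokerHands]
    _ = straightFlushValueSets.card * (Finset.univ : Finset (Fin 4)).card :=
        card_suitedHands hempty Finset.univ
    _ = 9 * 4 := by rw [card_straightFlushValueSets, Finset.card_fin]
end

section
/- The number of Flush hands — 5-card hands whose cards all have the same suit and whose set of values is not a straight value-set (so the hand is neither a Royal Flush nor a Straight Flush) — equals 5108. -/
/-!
A hand of a single suit `s` is `V ×ˢ {s}` for its set of values `V`, so the flushes correspond to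
the pairs `(V, s)` in which `V` is a five-element set of values other than the 10 straights. There
are `(C(13, 5) - 10) * 4 = (1287 - 10) * 4 = 5108` such pairs.
-/

section SingleSnd

open Finset

variable {α β : Type*}

theorem product_singleton_inj_of_nonempty {s s' : Finset α} {b b' : β} (hs : s.Nonempty) :
    s ×ˢ ({b} : Finset β) = s' ×ˢ {b'} ↔ s = s' ∧ b = b' := by
  rw [← coe_inj, coe_product, coe_product,
    Set.prod_eq_prod_iff_of_nonempty (by simpa using hs), coe_inj, coe_inj, singleton_inj]

theorem image_fst_product_singleton_of_forall_snd_eq [DecidableEq α] {h : Finset (α × β)} {b : β}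
    (hb : ∀ c ∈ h, c.2 = b) : h.image Prod.fst ×ˢ {b} = h := by
  ext ⟨a, b'⟩
  simp only [mem_product, mem_image, Prod.exists, exists_and_right, exists_eq_right, mem_singleton]
  constructor
  · rintro ⟨⟨b₀, hmem⟩, rfl⟩
    exact hb _ hmem ▸ hmem
  · exact fun hmem ↦ ⟨⟨b', hmem⟩, hb _ hmem⟩

theorem card_powersetCard_product_filter_snd_const [DecidableEq α] {k : ℕ} (hk : k ≠ 0)
    (s : Finset α) (t : Finset β) (p : Finset α → Prop) [DecidablePred p]
    [DecidablePred fun h : Finset (α × β) ↦ (∃ b, ∀ c ∈ h, c.2 = b) ∧ p (h.image Prod.fst)] :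
    #{h ∈ (s ×ˢ t).powersetCard k | (∃ b, ∀ c ∈ h, c.2 = b) ∧ p (h.image Prod.fst)} =
      #{v ∈ s.powersetCard k | p v} * #t := by
  rw [← card_product]
  symm
  refine card_nbij (fun q ↦ q.1 ×ˢ {q.2}) ?mapsTo ?injOn ?surjOn
  case mapsTo =>
    rintro ⟨v, b⟩ hvb
    simp only [mem_coe, mem_product, mem_filter, mem_powersetCard] at hvb ⊢
    obtain ⟨⟨⟨hvs, hvk⟩, hpv⟩, hbt⟩ := hvb
    refine ⟨⟨product_subset_product hvs (singleton_subset_iff.2 hbt), by simpa using hvk⟩,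
      ⟨b, fun c hc ↦ mem_singleton.1 hc.2⟩, ?_⟩
    rwa [product_image_fst (singleton_nonempty b)]
  case injOn =>
    rintro ⟨v, b⟩ hvb ⟨v', b'⟩ - heq
    simp only [coe_product, Set.mem_prod, mem_coe, mem_filter, mem_powersetCard] at hvb
    have hv : v.Nonempty := card_ne_zero.1 (hvb.1.1.2 ▸ hk)
    exact Prod.ext_iff.2 ((product_singleton_inj_of_nonempty hv).1 heq)
  case surjOn =>
    intro h hh
    simp only [mem_coe, mem_filter, mem_powersetCard] at hh
    obtain ⟨⟨hst, hcard⟩, ⟨b, hb⟩, hp⟩ := hh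
    have heq := image_fst_product_singleton_of_forall_snd_eq hb
    have hv : #(h.image Prod.fst) = k := by
      rw [← hcard, ← congrArg card heq, card_product, card_singleton, mul_one]
    obtain ⟨c, hc⟩ : h.Nonempty := card_ne_zero.1 (hcard ▸ hk)
    have hbt : b ∈ t := hb c hc ▸ (mem_product.1 (hst hc)).2
    have hvs : h.image Prod.fst ⊆ s := image_subset_iff.2 fun c hc ↦ (mem_product.1 (hst hc)).1
    exact ⟨(h.image Prod.fst, b), by simp [hvs, hv, hp, hbt], heq⟩

end SingleSnd

theorem card_straightValueSets : straightValueSets.card = 10 := by decide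

theorem straightValueSets_subset_powersetCard :
    straightValueSets ⊆ Finset.univ.powersetCard 5 := by
  have card_eq_five : ∀ v ∈ straightValueSets, v.card = 5 := by
    simp only [straightValueSets, Finset.forall_mem_insert, Finset.mem_singleton, forall_eq]
    decide
  exact fun v hv ↦ Finset.mem_powersetCard_univ.2 (card_eq_five v hv)

theorem card_powersetCard_filter_notMem_straightValueSets :
    ((Finset.univ.powersetCard 5).filter (· ∉ straightValueSets)).card =
      Nat.choose 13 5 - 10 := by
  rw [Finset.filter_notMem_eq_sdiff,
    Finset.card_sdiff_of_subset straightValueSets_subset_powersetCard,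
    Finset.card_powersetCard, Finset.card_univ, Fintype.card_fin, card_straightValueSets]

/-- There are exactly 5108 Flush hands. -/
theorem card_flush : (pokerHands.filter Flush).card = 5108 := by
  calc (pokerHands.filter Flush).card
      = ((Finset.univ.powersetCard 5).filter (· ∉ straightValueSets)).card *
          (Finset.univ : Finset (Fin 4)).card :=
        card_powersetCard_product_filter_snd_const (by decide) Finset.univ Finset.univ
          (· ∉ straightValueSets)
    _ = (Nat.choose 13 5 - 10) * 4 := by
        rw [card_powersetCard_filter_notMem_straightValueSets, Finset.card_univ, Fintype.card_fin]
    _ = 5108 := by decide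
end

section
/- The number of Three of a Kind hands — 5-card hands for which there exists a value v such that exactly 3 cards of the hand have value v and the remaining 2 cards have two further distinct values (distinct from v and from each other) — equals 54912. -/
/-!
A five-card hand of three of a kind is determined, up to the choice of suits, by its profile: the
function counting the cards of each value. The profile takes the value `3` at some `v`, the value
`1` on a set `T` of two other values, and `0` elsewhere, because `3 + 1 + 1` already exhausts the
five cards. Suits are chosen independently at each value, so every such profile is realised by
`C(4,3) * 4 ^ 2` hands, and there are `13 * C(12,2)` profiles.
-/

section Profile

open Finset

variable {α ι : Type*} [DecidableEq ι]

/-- The profile of a finite set `h` with respect to a labelling `f`: how many elements of `h` carry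
each label. With `f = Prod.fst` on cards this is `countValue`. -/
def fiberProfile (f : α → ι) (h : Finset α) (i : ι) : ℕ := #{a ∈ h | f a = i}

lemma fiberProfile_fst_univ {β : Type*} [Fintype ι] [Fintype β] (i : ι) :
    fiberProfile Prod.fst (univ : Finset (ι × β)) i = Fintype.card β := by
  have fiber_eq : ({p | p.1 = i} : Finset (ι × β)) = {i} ×ˢ univ := by
    ext p
    simp only [mem_filter, mem_univ, true_and, mem_product, mem_singleton, and_true]
  rw [fiberProfile, fiber_eq, card_product, card_singleton, one_mul, card_univ]

lemma sum_fiberProfile [Fintype ι] (f : α → ι) (h : Finset α) :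
    ∑ i, fiberProfile f h i = #h :=
  (card_eq_sum_card_fiberwise fun _ _ => mem_coe.2 (mem_univ _)).symm

lemma card_filter_fiberProfile_eq [Fintype ι] (f : α → ι) (s : Finset α) (c : ι → ℕ) :
    #{h ∈ s.powerset | fiberProfile f h = c} = ∏ i, (fiberProfile f s i).choose (c i) := by
  classical
  simp only [fiberProfile, ← card_powersetCard, ← Fintype.card_piFinset]
  have fiber_biUnion {g : ι → Finset α}
      (hg : g ∈ Fintype.piFinset fun i => powersetCard (c i) {a ∈ s | f a = i}) (i : ι) :
      {a ∈ univ.biUnion g | f a = i} = g i := by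
    have label_eq : ∀ j, ∀ a ∈ g j, f a = j := fun j a ha =>
      (mem_filter.1 ((mem_powersetCard.1 (Fintype.mem_piFinset.1 hg j)).1 ha)).2
    ext a
    simp only [mem_filter, mem_biUnion, mem_univ, true_and]
    grind
  refine card_nbij' (fun h i => {a ∈ h | f a = i}) (fun g => univ.biUnion g) ?_ ?_ ?_ ?_
  · intro h hh
    obtain ⟨hs, rfl⟩ := mem_filter.1 hh
    exact Fintype.mem_piFinset.2 fun i =>
      mem_powersetCard.2 ⟨filter_subset_filter _ (mem_powerset.1 hs), rfl⟩
  · intro g hg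
    have hg' i := mem_powersetCard.1 (Fintype.mem_piFinset.1 hg i)
    refine mem_filter.2 ⟨mem_powerset.2 (biUnion_subset.2 fun i _ =>
      (hg' i).1.trans (filter_subset _ _)), funext fun i => ?_⟩
    rw [fiberProfile, fiber_biUnion hg, (hg' i).2]
  · intro h _
    ext a
    simp
  · intro g hg
    exact funext (fiber_biUnion hg)

/-- The profile of a set with `k` elements labelled `v` and one element for each label in `T`. It is
meant for `v ∉ T`. -/
def kindProfile (k : ℕ) (v : ι) (T : Finset ι) (i : ι) : ℕ :=
  if i = v then k else if i ∈ T then 1 else 0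

@[simp]
lemma kindProfile_self (k : ℕ) (v : ι) (T : Finset ι) : kindProfile k v T v = k :=
  if_pos rfl

lemma kindProfile_of_mem {k : ℕ} {v i : ι} {T : Finset ι} (hv : v ∉ T) (hi : i ∈ T) :
    kindProfile k v T i = 1 := by
  rw [kindProfile, if_neg (ne_of_mem_of_not_mem hi hv), if_pos hi]

@[to_additive]
lemma prod_comp_kindProfile {M : Type*} [CommMonoid M] [Fintype ι] {g : ℕ → M} (hg : g 0 = 1)
    (k : ℕ) {v : ι} {T : Finset ι} (hv : v ∉ T) :
    ∏ i, g (kindProfile k v T i) = g k * g 1 ^ #T := by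
  have off_support : ∀ i ∉ insert v T, g (kindProfile k v T i) = 1 := by
    intro i hi
    rw [mem_insert, not_or] at hi
    rw [kindProfile, if_neg hi.1, if_neg hi.2, hg]
  rw [← prod_subset (subset_univ (insert v T)) fun i _ => off_support i, prod_insert hv,
    kindProfile_self]
  congr 1
  exact prod_eq_pow_card fun i hi => by rw [kindProfile_of_mem hv hi]

lemma kindProfile_inj {k : ℕ} (hk : 2 ≤ k) {v w : ι} {T U : Finset ι} (hv : v ∉ T) (hw : w ∉ U) :
    kindProfile k v T = kindProfile k w U ↔ v = w ∧ T = U := by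
  refine ⟨fun h => ?_, by rintro ⟨rfl, rfl⟩; rfl⟩
  have eq_iff (v : ι) (T : Finset ι) (i : ι) : kindProfile k v T i = k ↔ i = v := by
    grind [kindProfile]
  have eq_one_iff {v : ι} {T : Finset ι} (hv : v ∉ T) (i : ι) :
      kindProfile k v T i = 1 ↔ i ∈ T := by
    grind [kindProfile]
  constructor
  · rw [← eq_iff w U, ← h, kindProfile_self]
  · ext i
    rw [← eq_one_iff hv, h, eq_one_iff hw]

lemma fiberProfile_eq_kindProfile_iff [Finite ι] {f : α → ι} {h : Finset α} {k : ℕ} {v : ι}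
    {T : Finset ι} (hv : v ∉ T) :
    fiberProfile f h = kindProfile k v T ↔
      #h = k + #T ∧ fiberProfile f h v = k ∧ ∀ i ∈ T, fiberProfile f h i = 1 := by
  cases nonempty_fintype ι
  have sum_kindProfile : ∑ i, kindProfile k v T i = k + #T := by
    simpa using sum_comp_kindProfile (g := id) rfl k hv
  constructor
  · intro hp
    rw [← sum_fiberProfile f, hp, sum_kindProfile]
    exact ⟨rfl, kindProfile_self k v T, fun i hi => kindProfile_of_mem hv hi⟩
  · rintro ⟨hcard, hkind, hkickers⟩
    have kindProfile_le : ∀ i ∈ univ, kindProfile k v T i ≤ fiberProfile f h i := by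
      grind [kindProfile]
    have sum_eq : ∑ i, kindProfile k v T i = ∑ i, fiberProfile f h i := by
      rw [sum_kindProfile, sum_fiberProfile, hcard]
    exact funext fun i => ((sum_eq_sum_iff_of_le kindProfile_le).1 sum_eq i (mem_univ i)).symm

/-- `k` of a kind with `j` kickers: some label occurs exactly `k` times in `h`, and `j` further
labels occur exactly once. Nothing is required of the other labels, but if `h` has `k + j` elements
they cannot occur. -/
def IsKindWithKickers (f : α → ι) (k j : ℕ) (h : Finset α) : Prop :=
  ∃ v, fiberProfile f h v = k ∧ ∃ T : Finset ι, v ∉ T ∧ #T = j ∧ ∀ i ∈ T, fiberProfile f h i = 1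

/-- The pairs `(v, T)` of a label and a set of `j` other labels: the possible labels of `k` of a
kind and of its `j` kickers. The kickers form a set because their order is immaterial. -/
def kindLabels (ι : Type*) [Fintype ι] [DecidableEq ι] (j : ℕ) : Finset (Σ _ : ι, Finset ι) :=
  univ.sigma fun v => (univ.erase v).powersetCard j

lemma mem_kindLabels [Fintype ι] {j : ℕ} {p : Σ _ : ι, Finset ι} :
    p ∈ kindLabels ι j ↔ p.1 ∉ p.2 ∧ #p.2 = j := by
  simp [kindLabels, subset_erase]

lemma card_kindLabels [Fintype ι] (j : ℕ) :
    #(kindLabels ι j) = Fintype.card ι * (Fintype.card ι - 1).choose j := by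
  simp [kindLabels]

lemma filter_isKindWithKickers [Fintype ι] [DecidableEq α] (f : α → ι) (s : Finset α) (k j : ℕ)
    [DecidablePred (IsKindWithKickers f k j)] :
    {h ∈ s.powersetCard (k + j) | IsKindWithKickers f k j h} =
      (kindLabels ι j).biUnion fun p =>
        {h ∈ s.powerset | fiberProfile f h = kindProfile k p.1 p.2} := by
  ext h
  simp only [mem_filter, mem_biUnion, mem_powersetCard, mem_powerset, mem_kindLabels,
    Sigma.exists]
  constructor
  · rintro ⟨⟨hs, hcard⟩, v, hkind, T, hv, rfl, hkickers⟩
    exact ⟨v, T, ⟨hv, rfl⟩, hs, (fiberProfile_eq_kindProfile_iff hv).2 ⟨hcard, hkind, hkickers⟩⟩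
  · rintro ⟨v, T, ⟨hv, rfl⟩, hs, hp⟩
    obtain ⟨hcard, hkind, hkickers⟩ := (fiberProfile_eq_kindProfile_iff hv).1 hp
    exact ⟨⟨hs, hcard⟩, v, hkind, T, hv, rfl, hkickers⟩

lemma pairwiseDisjoint_kindLabels [Fintype ι] (f : α → ι) (s : Finset α) {k : ℕ} (hk : 2 ≤ k)
    (j : ℕ) :
    (kindLabels ι j : Set (Σ _ : ι, Finset ι)).PairwiseDisjoint fun p =>
      {h ∈ s.powerset | fiberProfile f h = kindProfile k p.1 p.2} := by
  rintro ⟨v, T⟩ hp ⟨w, U⟩ hq hne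
  refine disjoint_filter.2 fun h _ hT hU => hne ?_
  obtain ⟨rfl, rfl⟩ :=
    (kindProfile_inj hk (mem_kindLabels.1 hp).1 (mem_kindLabels.1 hq).1).1 (hT.symm.trans hU)
  rfl

theorem card_threeOfAKind_general [Fintype ι] {f : α → ι} {s : Finset α} {m k : ℕ}
    (hm : ∀ i, fiberProfile f s i = m) (hk : 2 ≤ k) (j : ℕ)
    [DecidablePred (IsKindWithKickers f k j)] :
    #{h ∈ s.powersetCard (k + j) | IsKindWithKickers f k j h} =
      Fintype.card ι * (Fintype.card ι - 1).choose j * (m.choose k * m ^ j) := by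
  classical
  have card_sets_with_labels : ∀ p ∈ kindLabels ι j,
      #{h ∈ s.powerset | fiberProfile f h = kindProfile k p.1 p.2} = m.choose k * m ^ j := by
    intro p hp
    obtain ⟨hv, rfl⟩ := mem_kindLabels.1 hp
    simp_rw [card_filter_fiberProfile_eq, hm]
    rw [prod_comp_kindProfile (Nat.choose_zero_right m) k hv, Nat.choose_one_right]
  rw [filter_isKindWithKickers, card_biUnion (pairwiseDisjoint_kindLabels f s hk j),
    sum_const_nat card_sets_with_labels, card_kindLabels]

end Profile

lemma threeOfAKind_iff_isKindWithKickers (h : Finset Card) :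
    ThreeOfAKind h ↔ IsKindWithKickers Prod.fst 3 2 h := by
  refine exists_congr fun v => and_congr_right fun _ => ?_
  constructor
  · rintro ⟨a, b, hab, hav, hbv, ha, hb⟩
    refine ⟨{a, b}, by simp [hav.symm, hbv.symm], Finset.card_pair hab, ?_⟩
    simpa using ⟨ha, hb⟩
  · rintro ⟨T, hv, hT, hkickers⟩
    obtain ⟨a, b, hab, rfl⟩ := Finset.card_eq_two.1 hT
    simp only [Finset.mem_insert, Finset.mem_singleton, not_or] at hv
    exact ⟨a, b, hab, Ne.symm hv.1, Ne.symm hv.2, hkickers a (by simp), hkickers b (by simp)⟩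

/-- There are exactly 54912 Three of a Kind hands. -/
theorem card_threeOfAKind : (pokerHands.filter ThreeOfAKind).card = 54912 := by
  classical
  have four_suits (v : Fin 13) : fiberProfile Prod.fst (Finset.univ : Finset Card) v = 4 :=
    fiberProfile_fst_univ v
  calc (pokerHands.filter ThreeOfAKind).card
      = 13 * Nat.choose 12 2 * (Nat.choose 4 3 * 4 ^ 2) := by
        simp only [threeOfAKind_iff_isKindWithKickers]
        exact card_threeOfAKind_general four_suits (Nat.le_succ 2) 2
    _ = 54912 := by norm_num [Nat.choose]
end

section
/- The number of Two Pair hands — 5-card hands for which there exist distinct values v ≠ w such that exactly 2 cards of the hand have value v, exactly 2 cards have value w, and the remaining card has a value different from both v and w — equals 123552. -/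
/-!
A hand is recorded by how many of its cards have each value. A two pair hand has count `2` on a
set `P` of two values, count `1` at a kicker `k ∉ P`, and count `0` elsewhere, and a hand with
prescribed counts amounts to an independent choice of suits at each value. Hence the number is
`(13.choose 2 * 11) * ((4.choose 2) ^ 2 * 4) = 858 * 144`.
-/

section

open Finset

section FiberCard

variable {α β : Type*} [DecidableEq β]

/-- The number of elements of `s` in the fiber of `f` over `b`. For `f = Prod.fst` on cards this is
`countValue s b`. -/
def fiberCard (f : α → β) (s : Finset α) (b : β) : ℕ :=
  #{a ∈ s | f a = b}

theorem fiberCard_pos_iff {f : α → β} {s : Finset α} {b : β} :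
    0 < fiberCard f s b ↔ ∃ a ∈ s, f a = b := by
  simp [fiberCard, card_pos, filter_nonempty_iff]

theorem fiberCard_fst_univ {ι κ : Type*} [DecidableEq ι] [Fintype ι] [Fintype κ] (i : ι) :
    fiberCard (Prod.fst : ι × κ → ι) univ i = Fintype.card κ := by
  rw [fiberCard, ← univ_product_univ, filter_product_left (· = i)]
  simp [filter_eq']

theorem filter_mem_apply_and_eq [Fintype α] [DecidableEq α] {f : α → β} {t : β → Finset α} {b : β}
    (ht : t b ⊆ ({a | f a = b} : Finset α)) :
    ({a | a ∈ t (f a) ∧ f a = b} : Finset α) = t b := by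
  ext a
  simp only [mem_filter, mem_univ, true_and]
  constructor
  · rintro ⟨ha, rfl⟩
    exact ha
  · intro ha
    obtain rfl : f a = b := (mem_filter.1 (ht ha)).2
    exact ⟨ha, rfl⟩

variable [Fintype β]

theorem sum_fiberCard (f : α → β) (s : Finset α) : ∑ b, fiberCard f s b = #s :=
  (card_eq_sum_card_fiberwise fun _ _ ↦ mem_coe.2 (mem_univ _)).symm

theorem card_filter_fiberCard_eq [Fintype α] (f : α → β) (n : β → ℕ) :
    #{s : Finset α | fiberCard f s = n} = ∏ b, (fiberCard f univ b).choose (n b) := by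
  classical
  simp_rw [fiberCard, ← card_powersetCard, ← Fintype.card_piFinset]
  refine card_nbij' (fun s b ↦ {a ∈ s | f a = b}) (fun t ↦ ({a | a ∈ t (f a)} : Finset α))
    ?_ ?_ ?_ ?_
  · intro s hs
    obtain rfl := (mem_filter.1 hs).2
    exact Fintype.mem_piFinset.2 fun b ↦
      mem_powersetCard.2 ⟨filter_subset_filter _ (subset_univ s), rfl⟩
  · intro t ht
    simp only [mem_coe, Fintype.mem_piFinset, mem_powersetCard] at ht
    refine mem_filter.2 ⟨mem_univ _, funext fun b ↦ ?_⟩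
    rw [fiberCard, filter_filter, filter_mem_apply_and_eq (ht b).1, (ht b).2]
  · intro s _
    ext a
    simp
  · intro t ht
    simp only [mem_coe, Fintype.mem_piFinset, mem_powersetCard] at ht
    simp only [filter_filter]
    exact funext fun b ↦ filter_mem_apply_and_eq (ht b).1

end FiberCard

section TwoPairCount

variable {β : Type*} [DecidableEq β]

/-- The number of cards of each value in a two pair hand with pairs at the values in `P` and
kicker of value `k`. It is meant for `k ∉ P`. -/
def twoPairCount (P : Finset β) (k v : β) : ℕ :=
  if v ∈ P then 2 else if v = k then 1 else 0

theorem twoPairCount_eq_two_iff {P : Finset β} {k v : β} : twoPairCount P k v = 2 ↔ v ∈ P := by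
  grind [twoPairCount]

theorem twoPairCount_eq_one_iff {P : Finset β} {k v : β} :
    twoPairCount P k v = 1 ↔ v ∉ P ∧ v = k := by
  grind [twoPairCount]

theorem twoPairCount_inj {P Q : Finset β} {k l : β} (hk : k ∉ P)
    (h : twoPairCount P k = twoPairCount Q l) : P = Q ∧ k = l := by
  constructor
  · ext v
    rw [← twoPairCount_eq_two_iff (k := k), h, twoPairCount_eq_two_iff]
  · have hone : twoPairCount Q l k = 1 := h ▸ twoPairCount_eq_one_iff.2 ⟨hk, rfl⟩
    exact (twoPairCount_eq_one_iff.1 hone).2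

variable [Fintype β]

@[to_additive]
theorem prod_comp_twoPairCount {M : Type*} [CommMonoid M] {P : Finset β} {k : β} (hk : k ∉ P)
    {g : ℕ → M} (hg : g 0 = 1) : ∏ v, g (twoPairCount P k v) = g 2 ^ #P * g 1 := by
  calc ∏ v, g (twoPairCount P k v)
      = ∏ v, (if v ∈ P then g 2 else 1) * (if v = k then g 1 else 1) := by
        refine prod_congr rfl fun v _ ↦ ?_
        by_cases hv : v ∈ P
        · simp [twoPairCount, hv, ne_of_mem_of_not_mem hv hk]
        · simp [twoPairCount, hv, apply_ite g, hg]
    _ = g 2 ^ #P * g 1 := by rw [prod_mul_distrib]; simp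

theorem sum_twoPairCount {P : Finset β} {k : β} (hk : k ∉ P) :
    ∑ v, twoPairCount P k v = 2 * #P + 1 := by
  simpa [mul_comm] using sum_comp_twoPairCount hk (g := id) rfl

variable (β) in
/-- The choices of values for a two pair hand: `⟨P, k⟩` with `P` the set of the two paired values
and `k ∉ P` the value of the kicker. -/
def twoPairValues : Finset (Σ _ : Finset β, β) :=
  (powersetCard 2 univ).sigma fun P ↦ Pᶜ

theorem mem_twoPairValues {x : Σ _ : Finset β, β} :
    x ∈ twoPairValues β ↔ #x.1 = 2 ∧ x.2 ∉ x.1 := by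
  simp [twoPairValues]

theorem card_twoPairValues :
    #(twoPairValues β) = (Fintype.card β).choose 2 * (Fintype.card β - 2) := by
  have card_kickers : ∀ P ∈ powersetCard 2 (univ : Finset β), #Pᶜ = Fintype.card β - 2 :=
    fun P hP ↦ by rw [card_compl, (mem_powersetCard.1 hP).2]
  rw [twoPairValues, card_sigma, sum_const_nat card_kickers, card_powersetCard, card_univ]

end TwoPairCount

section TwoPairFinsets

variable {α β : Type*} [DecidableEq β]

theorem fiberCard_eq_twoPairCount [Finite β] {f : α → β} {s : Finset α} (hs : #s = 5)
    {v w : β} (hvw : v ≠ w) (hv : fiberCard f s v = 2) (hw : fiberCard f s w = 2) {a : α}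
    (ha : a ∈ s) (hav : f a ≠ v) (haw : f a ≠ w) : fiberCard f s = twoPairCount {v, w} (f a) := by
  cases nonempty_fintype β
  have hk : f a ∉ ({v, w} : Finset β) := by simp [hav, haw]
  have ha_pos : 0 < fiberCard f s (f a) := fiberCard_pos_iff.2 ⟨a, ha, rfl⟩
  have hle : ∀ b ∈ univ, twoPairCount {v, w} (f a) b ≤ fiberCard f s b := by
    grind [twoPairCount]
  have hsum : ∑ b, twoPairCount {v, w} (f a) b = ∑ b, fiberCard f s b := by
    rw [sum_twoPairCount hk, card_pair hvw, sum_fiberCard, hs]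
  exact funext fun b ↦ ((sum_eq_sum_iff_of_le hle).1 hsum b (mem_univ b)).symm

theorem exists_fiberCard_eq_twoPairCount_iff [Finite β] {f : α → β} {s : Finset α} :
    (∃ P k, (#P = 2 ∧ k ∉ P) ∧ fiberCard f s = twoPairCount P k) ↔
      #s = 5 ∧ ∃ v w, v ≠ w ∧ fiberCard f s v = 2 ∧ fiberCard f s w = 2 ∧
        ∃ a ∈ s, f a ≠ v ∧ f a ≠ w := by
  cases nonempty_fintype β
  constructor
  · rintro ⟨P, k, ⟨hP, hk⟩, hcount⟩
    have hcard : #s = 5 := by rw [← sum_fiberCard f, hcount, sum_twoPairCount hk, hP]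
    have hpair {v : β} (hv : v ∈ P) : fiberCard f s v = 2 :=
      hcount ▸ twoPairCount_eq_two_iff.2 hv
    have hkicker : fiberCard f s k = 1 := hcount ▸ twoPairCount_eq_one_iff.2 ⟨hk, rfl⟩
    obtain ⟨a, ha, rfl⟩ := fiberCard_pos_iff.1 (hkicker.symm ▸ one_pos)
    obtain ⟨v, w, hvw, rfl⟩ := card_eq_two.1 hP
    have hne : f a ≠ v ∧ f a ≠ w := by simpa using hk
    exact ⟨hcard, v, w, hvw, hpair (by simp), hpair (by simp), a, ha, hne⟩
  · rintro ⟨hcard, v, w, hvw, hv, hw, a, ha, hav, haw⟩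
    exact ⟨{v, w}, f a, ⟨card_pair hvw, by simp [hav, haw]⟩,
      fiberCard_eq_twoPairCount hcard hvw hv hw ha hav haw⟩

variable [Fintype α] [Fintype β]

theorem pairwiseDisjoint_fiberCard_eq_twoPairCount (f : α → β) :
    (twoPairValues β : Set (Σ _ : Finset β, β)).PairwiseDisjoint fun x ↦
      ({s | fiberCard f s = twoPairCount x.1 x.2} : Finset (Finset α)) := by
  rintro ⟨P, k⟩ hx ⟨Q, l⟩ - hne
  obtain ⟨-, hk⟩ := mem_twoPairValues.1 hx
  refine disjoint_filter.2 fun s _ hPk hQl ↦ hne ?_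
  obtain ⟨rfl, rfl⟩ := twoPairCount_inj hk (hPk.symm.trans hQl)
  rfl

variable [DecidableEq α]

/-- The two pair hands of an arbitrary finite deck `α` whose cards have values given by `f`. -/
def twoPairFinsets (f : α → β) : Finset (Finset α) :=
  (twoPairValues β).biUnion fun x ↦ {s | fiberCard f s = twoPairCount x.1 x.2}

theorem mem_twoPairFinsets {f : α → β} {s : Finset α} :
    s ∈ twoPairFinsets f ↔ #s = 5 ∧ ∃ v w, v ≠ w ∧ fiberCard f s v = 2 ∧ fiberCard f s w = 2 ∧
      ∃ a ∈ s, f a ≠ v ∧ f a ≠ w := by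
  simp only [twoPairFinsets, mem_biUnion, mem_twoPairValues, Sigma.exists, mem_filter, mem_univ,
    true_and, exists_fiberCard_eq_twoPairCount_iff]

theorem card_twoPairFinsets {f : α → β} {m : ℕ} (hf : ∀ b, fiberCard f univ b = m) :
    #(twoPairFinsets f) =
      (Fintype.card β).choose 2 * (Fintype.card β - 2) * (m.choose 2 ^ 2 * m) := by
  have card_hands : ∀ x ∈ twoPairValues β,
      #{s : Finset α | fiberCard f s = twoPairCount x.1 x.2} = m.choose 2 ^ 2 * m := by
    intro x hx
    obtain ⟨hP, hk⟩ := mem_twoPairValues.1 hx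
    simp only [card_filter_fiberCard_eq, hf]
    rw [prod_comp_twoPairCount hk m.choose_zero_right, hP, m.choose_one_right]
  rw [twoPairFinsets, card_biUnion (pairwiseDisjoint_fiberCard_eq_twoPairCount f),
    sum_const_nat card_hands, card_twoPairValues]

end TwoPairFinsets

theorem filter_twoPair_pokerHands : pokerHands.filter TwoPair = twoPairFinsets Prod.fst := by
  ext h
  rw [mem_filter, pokerHands, mem_powersetCard_univ, mem_twoPairFinsets]
  rfl

end

/-- There are exactly 123552 Two Pair hands. -/
theorem card_twoPair : (pokerHands.filter TwoPair).card = 123552 := by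
  rw [filter_twoPair_pokerHands, card_twoPairFinsets fiberCard_fst_univ, Fintype.card_fin,
    Fintype.card_fin]
  decide
end

section
/- The number of High Card hands — 5-card hands whose 5 cards have 5 pairwise distinct values, whose set of values is not a straight value-set, and whose cards do not all have the same suit — equals 1302540. -/
section Graph

open Finset

variable {α β : Type*} {V : Finset α}

theorem injective_val_prodMk (f : V → β) : Function.Injective fun v : V ↦ ((v : α), f v) :=
  fun _ _ h ↦ Subtype.ext (congrArg Prod.fst h)

/-- The graph of a function `f : V → β` defined on a finite subset `V` of `α`, as a finite set of
pairs. It encodes the hand that has one card of each value in `V`, with suits prescribed by `f`.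
The domain is the subtype `V`, so that distinct functions have distinct graphs. -/
def graphFinset (f : V → β) : Finset (α × β) :=
  univ.map ⟨fun v : V ↦ ((v : α), f v), injective_val_prodMk f⟩

theorem card_graphFinset (f : V → β) : #(graphFinset f) = #V := by
  simp [graphFinset]

theorem mem_graphFinset {f : V → β} {c : α × β} :
    c ∈ graphFinset f ↔ ∃ hc : c.1 ∈ V, f ⟨c.1, hc⟩ = c.2 := by
  obtain ⟨a, b⟩ := c
  simp [graphFinset]

theorem graphFinset_injective :
    Function.Injective (graphFinset : (V → β) → Finset (α × β)) := by
  intro f g hfg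
  funext v
  have hv : ((v : α), f v) ∈ graphFinset g := hfg ▸ mem_graphFinset.2 ⟨v.2, rfl⟩
  exact (mem_graphFinset.1 hv).2.symm

theorem forall_mem_graphFinset_snd_eq_iff {f : V → β} {b : β} :
    (∀ c ∈ graphFinset f, c.2 = b) ↔ f = Function.const V b := by
  simp [mem_graphFinset, funext_iff]

variable [DecidableEq α]

theorem image_fst_graphFinset (f : V → β) : (graphFinset f).image Prod.fst = V := by
  ext a
  simp [graphFinset]

theorem exists_graphFinset_eq_iff {h : Finset (α × β)} :
    (∃ f : V → β, graphFinset f = h) ↔ #h = #V ∧ h.image Prod.fst = V := by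
  constructor
  · rintro ⟨f, rfl⟩
    exact ⟨card_graphFinset f, image_fst_graphFinset f⟩
  · rintro ⟨hcard, rfl⟩
    have hlift (v : h.image Prod.fst) : ∃ b, ((v : α), b) ∈ h := by
      simpa only [mem_image, Prod.exists, exists_and_right, exists_eq_right] using v.2
    choose f hf using hlift
    have hsub : graphFinset f ⊆ h := by
      intro c hc
      obtain ⟨hcV, hfc⟩ := mem_graphFinset.1 hc
      simpa only [hfc] using hf ⟨c.1, hcV⟩
    exact ⟨f, eq_of_subset_of_card_le hsub (by rw [card_graphFinset, hcard])⟩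

variable [Fintype α] [Fintype β] [DecidableEq β]

theorem card_filter_not_exists_eq_const {ι : Type*} [Fintype ι] [DecidableEq ι] [Nonempty ι] :
    #{f : ι → β | ¬ ∃ b, f = Function.const ι b} =
      Fintype.card β ^ Fintype.card ι - Fintype.card β := by
  have hcompl : ({f : ι → β | ¬ ∃ b, f = Function.const ι b} : Finset (ι → β)) =
      (univ.image (Function.const ι))ᶜ := by
    ext f
    simp [eq_comm]
  rw [hcompl, card_compl, card_image_of_injective _ Function.const_injective, Fintype.card_fun,
    card_univ]

theorem card_filter_image_fst_eq (hV : V.Nonempty) :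
    #{h : Finset (α × β) | (#h = #V ∧ h.image Prod.fst = V) ∧ ¬ ∃ b, ∀ c ∈ h, c.2 = b} =
      Fintype.card β ^ #V - Fintype.card β := by
  have : Nonempty V := hV.to_subtype
  have hgraphs : ({h : Finset (α × β) | (#h = #V ∧ h.image Prod.fst = V) ∧
      ¬ ∃ b, ∀ c ∈ h, c.2 = b} : Finset (Finset (α × β))) =
      ({f : V → β | ¬ ∃ b, f = Function.const V b} : Finset (V → β)).image graphFinset := by
    ext h
    simp only [mem_filter_univ, mem_image, ← exists_graphFinset_eq_iff,
      ← forall_mem_graphFinset_snd_eq_iff]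
    constructor
    · rintro ⟨⟨f, rfl⟩, hf⟩
      exact ⟨f, hf, rfl⟩
    · rintro ⟨f, hf, rfl⟩
      exact ⟨⟨f, rfl⟩, hf⟩
  rw [hgraphs, card_image_of_injective _ graphFinset_injective, card_filter_not_exists_eq_const,
    Fintype.card_coe]

theorem card_filter_image_fst_mem {W : Finset (Finset α)} {k : ℕ} (hk : k ≠ 0)
    (hW : ∀ V ∈ W, #V = k) :
    #{h : Finset (α × β) | #h = k ∧ h.image Prod.fst ∈ W ∧ ¬ ∃ b, ∀ c ∈ h, c.2 = b} =
      #W * (Fintype.card β ^ k - Fintype.card β) := by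
  rw [card_eq_sum_card_fiberwise (f := image Prod.fst) (t := W)
    fun h hh ↦ (mem_filter.1 hh).2.2.1]
  refine sum_const_nat fun V hV ↦ ?_
  obtain rfl := hW V hV
  rw [← card_filter_image_fst_eq (card_ne_zero.1 hk), filter_filter]
  congr! 2 with h
  constructor
  · rintro ⟨⟨hcard, -, hsuit⟩, hfst⟩
    exact ⟨⟨hcard, hfst⟩, hsuit⟩
  · rintro ⟨⟨hcard, rfl⟩, hsuit⟩
    exact ⟨⟨hcard, hV, hsuit⟩, rfl⟩

end Graph

theorem card_powersetCard_sdiff_straightValueSets :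
    (Finset.univ.powersetCard 5 \ straightValueSets).card = Nat.choose 13 5 - 10 := by
  rw [Finset.card_sdiff_of_subset straightValueSets_subset_powersetCard, Finset.card_powersetCard,
    card_straightValueSets, Finset.card_fin]

theorem filter_highCard_eq :
    pokerHands.filter HighCard =
      ({h | h.card = 5 ∧ h.image Prod.fst ∈ Finset.univ.powersetCard 5 \ straightValueSets ∧
        ¬ ∃ s, ∀ c ∈ h, c.2 = s} : Finset (Finset Card)) := by
  ext h
  simp [pokerHands, HighCard, handValues, SameSuit, and_assoc]

/-- There are exactly 1302540 High Card hands. -/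
theorem card_highCard : (pokerHands.filter HighCard).card = 1302540 := by
  have hcard : ∀ V ∈ Finset.univ.powersetCard 5 \ straightValueSets, V.card = 5 := fun V hV ↦
    (Finset.mem_powersetCard.1 (Finset.mem_sdiff.1 hV).1).2
  calc (pokerHands.filter HighCard).card
      = (Finset.univ.powersetCard 5 \ straightValueSets).card *
          (Fintype.card (Fin 4) ^ 5 - Fintype.card (Fin 4)) := by
        rw [filter_highCard_eq]
        -- The two filters differ only in their decidability instances.
        convert card_filter_image_fst_mem (β := Fin 4) (by norm_num) hcard
    _ = (Nat.choose 13 5 - 10) * (4 ^ 5 - 4) := by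
        rw [card_powersetCard_sdiff_straightValueSets, Fintype.card_fin]
    _ = 1302540 := by norm_num [Nat.choose]
end
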